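/- arXiv:2102.02730 — 2 statements merged into one kernel-verified Lean document; each statement's English description precedes it below -/
import Mathlib

section
/- Define, for an n×n real matrix X, the vectorization vec X : (Fin n × Fin n) → ℝ by vec X (j, i) = X i j. Let T be an invertible n×n real matrix, let λ : Fin n → ℝ with λ ℓ ≠ 0 for all ℓ, let Λ = diagonal λ, and set A = T * Λ * T⁻¹. Then for any m ∈ ℕ, any family H : Fin m → Matrix (Fin n) (Fin n) ℝ, and any n×n real matrix C: vec (C - ∑ i, H i * C * (A⁻¹ ^ (i+1))) = (((T⁻¹)ᵀ ⊗ₖ 1) * (1 - ∑ i, (Λ⁻¹ ^ (i+1) ⊗ₖ H i)) * (Tᵀ ⊗ₖ 1)) *ᵥ (vec C). -/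
open Matrix Kronecker

/-- Column-major vectorization of an `n × n` matrix. -/
def vec {n : ℕ} (X : Matrix (Fin n) (Fin n) ℝ) : (Fin n × Fin n) → ℝ :=
  fun ji => X ji.2 ji.1

/-!
The identity `vec (H * C * B) = (Bᵀ ⊗ₖ H) *ᵥ vec C` turns `C ↦ C - ∑ i, H i * C * B i` into the
Kronecker-sum matrix `1 - ∑ i, (B i)ᵀ ⊗ₖ H i`. Since `⊗ₖ` is multiplicative in both factors
simultaneously, a simultaneous similarity `B i = T * M i * T⁻¹` of the left factors amounts to
conjugating this matrix by `Tᵀ ⊗ₖ 1`. The powers of `A⁻¹ = T * Λ⁻¹ * T⁻¹` are such a family.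
-/

section KroneckerSum

variable {ι n p q R : Type*} [DecidableEq n] [Fintype p] [DecidableEq p] [CommRing R]

theorem one_sub_sum_kronecker_mulVec_vec [Fintype n] (s : Finset ι)
    (B : ι → Matrix n n R) (H : ι → Matrix p p R) (C : Matrix p n R) :
    (1 - ∑ i ∈ s, (B i)ᵀ ⊗ₖ H i) *ᵥ C.vec = (C - ∑ i ∈ s, H i * C * B i).vec := by
  simp only [sub_mulVec, one_mulVec, sum_mulVec, kronecker_mulVec_vec, transpose_transpose,
    vec_sub, vec_sum]

theorem kronecker_one_conj_one_sub_sum_kronecker [Fintype q] [DecidableEq q]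
    {T : Matrix n q R} {S : Matrix q n R} (hTS : T * S = 1)
    (s : Finset ι) (M : ι → Matrix q q R) (H : ι → Matrix p p R) :
    (Sᵀ ⊗ₖ (1 : Matrix p p R)) * (1 - ∑ i ∈ s, (M i)ᵀ ⊗ₖ H i) * (Tᵀ ⊗ₖ (1 : Matrix p p R))
      = 1 - ∑ i ∈ s, (T * M i * S)ᵀ ⊗ₖ H i := by
  have conj_one : (Sᵀ ⊗ₖ (1 : Matrix p p R)) * (Tᵀ ⊗ₖ (1 : Matrix p p R)) = 1 := by
    rw [← mul_kronecker_mul, ← transpose_mul, hTS, transpose_one, Matrix.one_mul,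
      one_kronecker_one]
  have conj_kronecker (i : ι) :
      (Sᵀ ⊗ₖ (1 : Matrix p p R)) * ((M i)ᵀ ⊗ₖ H i) * (Tᵀ ⊗ₖ (1 : Matrix p p R))
        = (T * M i * S)ᵀ ⊗ₖ H i := by
    simp only [← mul_kronecker_mul, ← transpose_mul, Matrix.one_mul, Matrix.mul_one,
      Matrix.mul_assoc]
  simp only [Matrix.mul_sub, Matrix.sub_mul, Matrix.mul_one, Matrix.mul_sum, Matrix.sum_mul,
    conj_one, conj_kronecker]

end KroneckerSum

section Similarity

variable {n R : Type*} [Fintype n] [DecidableEq n] [CommRing R] {T : Matrix n n R}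

theorem conj_nonsing_inv_pow (hT : IsUnit T.det) (M : Matrix n n R) (k : ℕ) :
    (T * M * T⁻¹) ^ k = T * M ^ k * T⁻¹ :=
  (T.nonsingInvUnit hT).conj_pow M k

theorem inv_conj_nonsing_inv (hT : IsUnit T.det) (M : Matrix n n R) :
    (T * M * T⁻¹)⁻¹ = T * M⁻¹ * T⁻¹ := by
  rw [Matrix.mul_inv_rev, Matrix.mul_inv_rev, nonsing_inv_nonsing_inv T hT, Matrix.mul_assoc]

end Similarity

/-- `M` and `B` play the roles of `Λ⁻¹` and `A⁻¹`. -/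
theorem stmt_8_general {ι n p R : Type*} [Fintype n] [DecidableEq n] [Fintype p] [DecidableEq p]
    [CommRing R] {T M B : Matrix n n R} (hT : IsUnit T.det) (hB : B = T * M * T⁻¹)
    (s : Finset ι) (k : ι → ℕ) (H : ι → Matrix p p R) (C : Matrix p n R) :
    (C - ∑ i ∈ s, H i * C * B ^ k i).vec
      = (((T⁻¹)ᵀ ⊗ₖ (1 : Matrix p p R)) * (1 - ∑ i ∈ s, (Mᵀ ^ k i) ⊗ₖ H i)
          * (Tᵀ ⊗ₖ (1 : Matrix p p R))) *ᵥ C.vec := by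
  simp only [← transpose_pow]
  rw [kronecker_one_conj_one_sub_sum_kronecker (mul_nonsing_inv T hT),
    one_sub_sum_kronecker_mulVec_vec]
  simp only [hB, conj_nonsing_inv_pow hT]

theorem stmt_8 (n : ℕ)
    (T : Matrix (Fin n) (Fin n) ℝ) (hT : IsUnit T.det)
    (lam : Fin n → ℝ) (hlam : ∀ ℓ, lam ℓ ≠ 0)
    (Λ A : Matrix (Fin n) (Fin n) ℝ)
    (hΛ : Λ = Matrix.diagonal lam)
    (hA : A = T * Λ * T⁻¹)
    (m : ℕ) (H : Fin m → Matrix (Fin n) (Fin n) ℝ)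
    (C : Matrix (Fin n) (Fin n) ℝ) :
    _root_.vec (C - ∑ i : Fin m, H i * C * (A⁻¹ ^ ((i : ℕ) + 1)))
      = (((T⁻¹)ᵀ ⊗ₖ (1 : Matrix (Fin n) (Fin n) ℝ))
          * ((1 : Matrix (Fin n × Fin n) (Fin n × Fin n) ℝ)
              - ∑ i : Fin m, ((Λ⁻¹ ^ ((i : ℕ) + 1)) ⊗ₖ H i))
          * (Tᵀ ⊗ₖ (1 : Matrix (Fin n) (Fin n) ℝ))) *ᵥ (_root_.vec C) := by
  have hAinv : A⁻¹ = T * Λ⁻¹ * T⁻¹ := by rw [hA, inv_conj_nonsing_inv hT]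
  have hΛinv : (Λ⁻¹)ᵀ = Λ⁻¹ := by rw [transpose_nonsing_inv, hΛ, diagonal_transpose]
  have hvec := stmt_8_general hT hAinv Finset.univ (fun i : Fin m => (i : ℕ) + 1) H C
  rwa [hΛinv] at hvec
end

section
/- Let n ≥ 1, let a : Fin n → ℝ with a ℓ ≠ 0 for all ℓ, and let f : Fin p → Fin n → ℝ and g : Fin q → Fin n → ℝ. Assume that for all ℓ, m : Fin n, 1 - ∑ i, f i m * (a ℓ)^{-(i+1)} ≠ 0. Set Λ = diagonal a, F i = diagonal (f i), G j = diagonal (g j), M₁ := 1 - ∑ i, (Λ⁻¹ ^ (i+1) ⊗ₖ F i), and M₂ := 1 + ∑ j, (Λ⁻¹ ^ (j+1) ⊗ₖ G j). Define vec X : (Fin n × Fin n) → ℝ by vec X (j, i) = X i j. Then M₁ is invertible, and (M₂ * M₁⁻¹) *ᵥ (vec 1) = vec (diagonal c), where c ℓ := (1 + ∑ j, g j ℓ * (a ℓ)^{-(j+1)}) / (1 - ∑ i, f i ℓ * (a ℓ)^{-(i+1)}); moreover, for any P : Fin n → ℝ, the trace of (diagonal c) * (diagonal P) * (diagonal c)ᵀ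 equals ∑ ℓ, (c ℓ)^2 * P ℓ. -/
open Matrix Kronecker

/-!
Kronecker products of diagonal matrices are diagonal, so both `M₁` and `M₂` act on `vec X` by
rescaling each entry of `X` separately. When `X = 1` only the entries `(ℓ, ℓ)` survive, and there
the factor is the transfer function of the `ℓ`-th channel alone.
-/

section Diagonal

variable {n K R : Type*} [Fintype n] [DecidableEq n]

theorem isUnit_det_diagonal_iff [Field K] {v : n → K} :
    IsUnit (diagonal v).det ↔ ∀ i, v i ≠ 0 := by
  simp only [det_diagonal, isUnit_iff_ne_zero, Finset.prod_ne_zero_iff, Finset.mem_univ,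
    forall_const]

theorem inv_diagonal_of_ne_zero [Field K] {v : n → K} (hv : ∀ i, v i ≠ 0) :
    (diagonal v)⁻¹ = diagonal v⁻¹ := by
  refine inv_eq_right_inv ?_
  rw [diagonal_mul_diagonal, ← diagonal_one]
  exact congrArg diagonal (funext fun i => mul_inv_cancel₀ (hv i))

theorem diagonal_mul_inv_diagonal [Field K] (u : n → K) {v : n → K} (hv : ∀ i, v i ≠ 0) :
    diagonal u * (diagonal v)⁻¹ = diagonal (u / v) := by
  rw [inv_diagonal_of_ne_zero hv, diagonal_mul_diagonal, div_eq_mul_inv, Pi.mul_def]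

theorem trace_diagonal_mul_diagonal_mul_transpose [CommSemiring R] (c P : n → R) :
    (diagonal c * diagonal P * (diagonal c)ᵀ).trace = ∑ i, c i ^ 2 * P i := by
  rw [diagonal_transpose, diagonal_mul_diagonal, diagonal_mul_diagonal, trace_diagonal]
  exact Finset.sum_congr rfl fun i _ => by ring

end Diagonal

section Kronecker

variable {m n ι R : Type*} [DecidableEq m] [Fintype n] [DecidableEq n]

theorem sum_diagonal_pow_kronecker_diagonal [CommSemiring R] (s : Finset ι) (v : n → R)
    (k : ι → ℕ) (b : ι → m → R) :
    ∑ i ∈ s, (diagonal v ^ k i) ⊗ₖ diagonal (b i) =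
      diagonal fun x : n × m => ∑ i ∈ s, b i x.2 * v x.1 ^ k i := by
  simp only [diagonal_pow, diagonal_kronecker_diagonal, Pi.pow_apply, mul_comm (v _ ^ _)]
  rw [← Finset.sum_fn]
  exact (map_sum (diagonalAddMonoidHom (n × m) R) _ s).symm

theorem diagonal_mulVec_vec_diagonal [NonUnitalNonAssocSemiring R] (d : n × n → R) (v : n → R) :
    diagonal d *ᵥ (diagonal v).vec = (diagonal fun i => d (i, i) * v i).vec := by
  ext ⟨j, i⟩
  rw [mulVec_diagonal]
  obtain rfl | hij := eq_or_ne i j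
  · simp only [Matrix.vec, diagonal_apply_eq]
  · simp only [Matrix.vec, diagonal_apply_ne _ hij, mul_zero]

end Kronecker

theorem stmt_9_general {n K : Type*} [Fintype n] [DecidableEq n] [Field K] {p q : ℕ}
    (a : n → K) (ha : ∀ ℓ, a ℓ ≠ 0)
    (f : Fin p → n → K) (g : Fin q → n → K)
    (hf : ∀ ℓ m : n,
      1 - ∑ i : Fin p, f i m * ((a ℓ)⁻¹) ^ ((i : ℕ) + 1) ≠ 0)
    (Λ : Matrix n n K) (hΛ : Λ = diagonal a)
    (F : Fin p → Matrix n n K) (hF : ∀ i, F i = diagonal (f i))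
    (G : Fin q → Matrix n n K) (hG : ∀ j, G j = diagonal (g j))
    (M₁ M₂ : Matrix (n × n) (n × n) K)
    (hM₁ : M₁ = 1 - ∑ i : Fin p, ((Λ⁻¹ ^ ((i : ℕ) + 1)) ⊗ₖ F i))
    (hM₂ : M₂ = 1 + ∑ j : Fin q, ((Λ⁻¹ ^ ((j : ℕ) + 1)) ⊗ₖ G j))
    (c : n → K)
    (hc : ∀ ℓ, c ℓ = (1 + ∑ j : Fin q, g j ℓ * ((a ℓ)⁻¹) ^ ((j : ℕ) + 1))
                      / (1 - ∑ i : Fin p, f i ℓ * ((a ℓ)⁻¹) ^ ((i : ℕ) + 1))) :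
    IsUnit M₁.det ∧
      (M₂ * M₁⁻¹) *ᵥ (1 : Matrix n n K).vec = (diagonal c).vec ∧
      ∀ P : n → K,
        ((diagonal c) * (diagonal P) * (diagonal c)ᵀ).trace
          = ∑ ℓ, (c ℓ) ^ 2 * P ℓ := by
  obtain rfl := funext hF
  obtain rfl := funext hG
  have hΛ_inv : Λ⁻¹ = diagonal a⁻¹ := hΛ ▸ inv_diagonal_of_ne_zero ha
  have hM₁_diagonal : M₁ = diagonal fun x : n × n =>
      1 - ∑ i : Fin p, f i x.2 * (a x.1)⁻¹ ^ ((i : ℕ) + 1) := by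
    rw [hM₁, hΛ_inv, sum_diagonal_pow_kronecker_diagonal, ← diagonal_one, diagonal_sub]
    simp only [Pi.inv_apply]
  have hM₂_diagonal : M₂ = diagonal fun x : n × n =>
      1 + ∑ j : Fin q, g j x.2 * (a x.1)⁻¹ ^ ((j : ℕ) + 1) := by
    rw [hM₂, hΛ_inv, sum_diagonal_pow_kronecker_diagonal, ← diagonal_one, diagonal_add]
    simp only [Pi.inv_apply]
  have hM₁_ne_zero (x : n × n) : 1 - ∑ i : Fin p, f i x.2 * (a x.1)⁻¹ ^ ((i : ℕ) + 1) ≠ 0 :=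
    hf x.1 x.2
  refine ⟨?_, ?_, trace_diagonal_mul_diagonal_mul_transpose c⟩
  · rw [hM₁_diagonal]
    exact isUnit_det_diagonal_iff.mpr hM₁_ne_zero
  · rw [hM₁_diagonal, hM₂_diagonal, diagonal_mul_inv_diagonal _ hM₁_ne_zero, ← diagonal_one,
      diagonal_mulVec_vec_diagonal, funext hc]
    simp only [Pi.div_apply, mul_one]

theorem stmt_9 (n : ℕ) (hn : 1 ≤ n) (p q : ℕ)
    (a : Fin n → ℝ) (ha : ∀ ℓ, a ℓ ≠ 0)
    (f : Fin p → Fin n → ℝ) (g : Fin q → Fin n → ℝ)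
    (hf : ∀ ℓ m : Fin n,
      1 - ∑ i : Fin p, f i m * ((a ℓ)⁻¹) ^ ((i : ℕ) + 1) ≠ 0)
    (Λ : Matrix (Fin n) (Fin n) ℝ) (hΛ : Λ = Matrix.diagonal a)
    (F : Fin p → Matrix (Fin n) (Fin n) ℝ) (hF : ∀ i, F i = Matrix.diagonal (f i))
    (G : Fin q → Matrix (Fin n) (Fin n) ℝ) (hG : ∀ j, G j = Matrix.diagonal (g j))
    (M₁ M₂ : Matrix (Fin n × Fin n) (Fin n × Fin n) ℝ)
    (hM₁ : M₁ = 1 - ∑ i : Fin p, ((Λ⁻¹ ^ ((i : ℕ) + 1)) ⊗ₖ F i))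
    (hM₂ : M₂ = 1 + ∑ j : Fin q, ((Λ⁻¹ ^ ((j : ℕ) + 1)) ⊗ₖ G j))
    (c : Fin n → ℝ)
    (hc : ∀ ℓ, c ℓ = (1 + ∑ j : Fin q, g j ℓ * ((a ℓ)⁻¹) ^ ((j : ℕ) + 1))
                      / (1 - ∑ i : Fin p, f i ℓ * ((a ℓ)⁻¹) ^ ((i : ℕ) + 1))) :
    IsUnit M₁.det ∧
      (M₂ * M₁⁻¹) *ᵥ (_root_.vec 1) = _root_.vec (Matrix.diagonal c) ∧
      ∀ P : Fin n → ℝ,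
        ((Matrix.diagonal c) * (Matrix.diagonal P) * (Matrix.diagonal c)ᵀ).trace
          = ∑ ℓ, (c ℓ) ^ 2 * P ℓ :=
  stmt_9_general a ha f g hf Λ hΛ F hF G hG M₁ M₂ hM₁ hM₂ c hc
end
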